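/- arXiv:1606.08432 — 2 statements merged into one kernel-verified Lean document; each statement's English description precedes it below -/
import Mathlib

section
/- Let p ≥ 5 be a prime. Then ∑_{k=0}^{p-2} C(2k,k)/(k+1) ≡ (3/2)·(p/3) + 1/2 + 2p (mod p²), as a congruence of rational numbers, where (p/3) denotes the Legendre symbol of p modulo 3. -/
/-- Congruence of rational numbers modulo `p^m`: `a ≡ b (mod p^m)` means
`a - b = p^m · (s/t)` with `p` not dividing `t`. -/
def ratCongr (p m : ℕ) (a b : ℚ) : Prop :=
  ∃ s t : ℤ, ¬ ((p : ℤ) ∣ t) ∧ (a - b) * (t : ℚ) = (p : ℚ) ^ m * (s : ℚ)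

/-- The Legendre symbol `(p/3)`: `1` if `p ≡ 1 (mod 3)` and `-1` if `p ≡ 2 (mod 3)`. -/
def leg3 (p : ℕ) : ℤ := if p % 3 = 1 then 1 else -1

/-- The character modulo 3 with values `0, 1, -1`. -/
def chi3 (k : ℕ) : ℤ := if k % 3 = 1 then 1 else if k % 3 = 2 then -1 else 0

lemma chi3_rec (k : ℕ) : chi3 k + chi3 (k + 1) + chi3 (k + 2) = 0 := by
  unfold chi3
  have h : k % 3 = 0 ∨ k % 3 = 1 ∨ k % 3 = 2 := by omega
  rcases h with h | h | h <;> simp [Nat.add_mod, h]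

lemma telescope (a : ℕ → ℤ) (M : ℕ) :
    ∑ i ∈ Finset.range M, chi3 (i + 1) * (a i + a (i + 1) + a (i + 2))
      = a 0 - chi3 (M + 1) * a M + chi3 M * a (M + 1) := by
  induction M with
  | zero => simp [chi3]
  | succ M ih =>
    rw [Finset.sum_range_succ, ih]
    have h := chi3_rec M
    have h' : chi3 (M + 1 + 1) = - chi3 M - chi3 (M + 1) := by
      have : M + 1 + 1 = M + 2 := rfl
      rw [this]; linarith
    rw [h']
    have : M + 1 + 1 = M + 2 := rfl
    rw [this]
    ring

lemma choose_two_step (n j : ℕ) :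
    ((2 * (n + 1)).choose (n + 1 + (j + 1)) : ℤ)
      = (2 * n).choose (n + j) + 2 * (2 * n).choose (n + (j + 1)) + (2 * n).choose (n + (j + 2)) := by
  have e1 : 2 * (n + 1) = 2 * n + 1 + 1 := by ring
  have e2 : n + 1 + (j + 1) = n + j + 1 + 1 := by ring
  have e3 : n + (j + 1) = n + j + 1 := by ring
  have e4 : n + (j + 2) = n + j + 1 + 1 := by ring
  rw [e1, e2, e3, e4, Nat.choose_succ_succ, Nat.choose_succ_succ, Nat.choose_succ_succ (2 * n) (n + j + 1)]
  push_cast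
  simp only [Nat.succ_eq_add_one]
  ring

lemma central_sum (n M : ℕ) (h : n ≤ M) :
    ∑ k ∈ Finset.range n, ((2 * k).choose k : ℤ)
      = ∑ i ∈ Finset.range M, chi3 (i + 1) * ((2 * n).choose (n + (i + 1)) : ℤ) := by
  induction n with
  | zero => simp
  | succ n ih =>
    rw [Finset.sum_range_succ, ih (by omega)]
    have t := telescope (fun j => ((2 * n).choose (n + j) : ℤ)) M
    have z1 : (2 * n).choose (n + M) = 0 := Nat.choose_eq_zero_of_lt (by omega)
    have z2 : (2 * n).choose (n + (M + 1)) = 0 := Nat.choose_eq_zero_of_lt (by omega)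
    simp only [z1, z2] at t
    simp only [Nat.cast_zero, mul_zero, sub_zero, add_zero] at t
    rw [← t, ← Finset.sum_add_distrib]
    refine Finset.sum_congr rfl fun i _ => ?_
    rw [choose_two_step]
    ring

lemma binom_chi (n s : ℕ) :
    ∑ j ∈ Finset.range (n + 1), (n.choose j : ℤ) * chi3 (j + s) = (-1) ^ n * chi3 (2 * n + s) := by
  induction n generalizing s with
  | zero => simp
  | succ n ih =>
    have h0 := ih s
    have h1 := ih (s + 1)
    have h2 := chi3_rec (2 * n + s)
    have e : 2 * (n + 1) + s = 2 * n + s + 2 := by ring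
    rw [Finset.sum_range_succ', e]
    have hs : ∑ k ∈ Finset.range (n + 1), ((n + 1).choose (k + 1) : ℤ) * chi3 (k + 1 + s)
        = ∑ k ∈ Finset.range (n + 1), (n.choose k : ℤ) * chi3 (k + (s + 1))
          + ∑ k ∈ Finset.range (n + 1), (n.choose (k + 1) : ℤ) * chi3 (k + 1 + s) := by
      rw [← Finset.sum_add_distrib]
      refine Finset.sum_congr rfl fun k _ => ?_
      rw [Nat.choose_succ_succ]
      have : k + (s + 1) = k + 1 + s := by ring
      rw [this]
      push_cast
      ring
    have hq : ∑ k ∈ Finset.range (n + 1), (n.choose (k + 1) : ℤ) * chi3 (k + 1 + s) + chi3 s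
        = ∑ j ∈ Finset.range (n + 1), (n.choose j : ℤ) * chi3 (j + s) := by
      have := Finset.sum_range_succ' (fun j => (n.choose j : ℤ) * chi3 (j + s)) (n + 1)
      rw [Finset.sum_range_succ] at this
      simp at this
      rw [this]
    rw [hs, h1]
    simp only [Nat.choose_zero_right, Nat.cast_one, one_mul, zero_add]
    rw [add_assoc, hq, h0]
    have e' : 2 * n + (s + 1) = 2 * n + s + 1 := by ring
    rw [e', pow_succ]
    linear_combination (-1) ^ n * h2

lemma choose_two_p (p j : ℕ) (hp : p.Prime) (hj : j < p) :
    ((p : ℤ) ^ 2) ∣ ((2 * p).choose (p + j) : ℤ) - 2 * (p.choose j : ℤ) := by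
  have e : ((2 * p).choose (p + j) : ℤ)
      = ∑ i ∈ Finset.range (p + j + 1), (p.choose i : ℤ) * (p.choose (p + j - i) : ℤ) := by
    rw [two_mul, Nat.add_choose_eq, Finset.Nat.sum_antidiagonal_eq_sum_range_succ_mk]
    push_cast
    rfl
  have e2 : 2 * (p.choose j : ℤ) = ∑ i ∈ Finset.range (p + j + 1),
      ((if i = p then (p.choose j : ℤ) else 0) + (if i = j then (p.choose j : ℤ) else 0)) := by
    rw [Finset.sum_add_distrib, Finset.sum_ite_eq', Finset.sum_ite_eq',
      if_pos (Finset.mem_range.2 (by omega)), if_pos (Finset.mem_range.2 (by omega))]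
    ring
  rw [e, e2, ← Finset.sum_sub_distrib]
  refine Finset.dvd_sum fun i hi => ?_
  have hi := Finset.mem_range.1 hi
  by_cases h1 : i = p
  · subst h1
    have : i ≠ j := by omega
    simp [this]
  by_cases h2 : i = j
  · subst h2
    simp [h1]
  rw [if_neg h1, if_neg h2]
  simp only [add_zero, sub_zero]
  by_cases h3 : i < j
  · rw [Nat.choose_eq_zero_of_lt (show p < p + j - i by omega)]; simp
  by_cases h4 : p < i
  · rw [Nat.choose_eq_zero_of_lt h4]; simp
  rw [pow_two]
  exact mul_dvd_mul (Int.natCast_dvd_natCast.2 (hp.dvd_choose_self (by omega) (by omega)))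
    (Int.natCast_dvd_natCast.2 (hp.dvd_choose_self (by omega) (by omega)))

lemma central_sum_mod (p : ℕ) (hp : p.Prime) (hp5 : 5 ≤ p) :
    ((p : ℤ) ^ 2) ∣ ∑ k ∈ Finset.range p, ((2 * k).choose k : ℤ) - chi3 p := by
  obtain ⟨q, rfl⟩ : ∃ q, p = q + 1 := ⟨p - 1, by omega⟩
  rw [central_sum (q + 1) (q + 1) le_rfl, Finset.sum_range_succ]
  have e : 2 * (q + 1) = q + 1 + (q + 1) := by ring
  have hlast : ((2 * (q + 1)).choose (q + 1 + (q + 1)) : ℤ) = 1 := by rw [e]; simp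
  rw [hlast]
  have hb := binom_chi (q + 1) 0
  have hodd : Odd (q + 1) := hp.odd_of_ne_two (by omega)
  rw [hodd.neg_one_pow, Finset.sum_range_succ, Finset.sum_range_succ'] at hb
  have hc : chi3 (2 * (q + 1) + 0) = - chi3 (q + 1) := by
    unfold chi3
    have h : (q + 1) % 3 = 0 ∨ (q + 1) % 3 = 1 ∨ (q + 1) % 3 = 2 := by omega
    rcases h with h | h | h <;> simp [Nat.mul_mod, h]
  rw [hc] at hb
  have h0 : chi3 (0 + 0) = 0 := by simp [chi3]
  rw [h0] at hb
  simp only [Nat.choose_self, Nat.cast_one, one_mul, add_zero, mul_zero] at hb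
  have hb' : ∑ k ∈ Finset.range q, ((q + 1).choose (k + 1) : ℤ) * chi3 (k + 1) = 0 := by linarith
  have : ∑ i ∈ Finset.range q, chi3 (i + 1) * ((2 * (q + 1)).choose (q + 1 + (i + 1)) : ℤ)
        + chi3 (q + 1) * 1 - chi3 (q + 1)
      = ∑ i ∈ Finset.range q, chi3 (i + 1) * (((2 * (q + 1)).choose (q + 1 + (i + 1)) : ℤ)
        - 2 * ((q + 1).choose (i + 1) : ℤ)) := by
    have h2 : ∑ i ∈ Finset.range q, chi3 (i + 1) * (((2 * (q + 1)).choose (q + 1 + (i + 1)) : ℤ)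
        - 2 * ((q + 1).choose (i + 1) : ℤ))
        = ∑ i ∈ Finset.range q, chi3 (i + 1) * ((2 * (q + 1)).choose (q + 1 + (i + 1)) : ℤ)
          - 2 * ∑ k ∈ Finset.range q, ((q + 1).choose (k + 1) : ℤ) * chi3 (k + 1) := by
      rw [Finset.mul_sum, ← Finset.sum_sub_distrib]
      exact Finset.sum_congr rfl fun i _ => by ring
    rw [h2, hb']
    ring
  rw [this]
  refine Finset.dvd_sum fun i hi => Dvd.dvd.mul_left ?_ _
  exact choose_two_p (q + 1) (i + 1) hp (by have := Finset.mem_range.1 hi; omega)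

lemma central_last (q : ℕ) (hp : (q + 1).Prime) (hp5 : 5 ≤ q + 1) :
    (((q + 1 : ℕ) : ℤ) ^ 2) ∣ ((2 * q).choose q : ℤ) + ((q + 1 : ℕ) : ℤ) := by
  obtain ⟨c, hc⟩ := Nat.succ_dvd_centralBinom q
  have h1 := Nat.succ_mul_centralBinom_succ q
  have h2 := choose_two_p (q + 1) 0 hp (by omega)
  rw [add_zero, ← Nat.centralBinom_eq_two_mul_choose] at h2
  have h3 : Nat.centralBinom (q + 1) = 2 * (2 * q + 1) * c := by
    rw [hc] at h1
    refine Nat.eq_of_mul_eq_mul_left (Nat.succ_pos q) ?_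
    rw [Nat.succ_eq_add_one, h1]
    ring
  rw [h3] at h2
  have h4 : ((q + 1 : ℕ) : ℤ) ∣ 2 * (c + 1) := by
    have h5 := (dvd_pow_self ((q + 1 : ℕ) : ℤ) two_ne_zero).trans h2
    have h6 : ((q + 1 : ℕ) : ℤ) ∣ ((q + 1 : ℕ) : ℤ) * (4 * c) := dvd_mul_right _ _
    have := dvd_sub h6 h5
    refine this.trans (dvd_of_eq ?_)
    push_cast
    simp
    ring
  have hpi : Prime ((q + 1 : ℕ) : ℤ) := Nat.prime_iff_prime_int.1 hp
  have h7 : ((q + 1 : ℕ) : ℤ) ∣ (c : ℤ) + 1 := by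
    rcases hpi.dvd_or_dvd h4 with h | h
    · have := Int.le_of_dvd (by norm_num) h
      push_cast at this
      omega
    · exact h
  rw [← Nat.centralBinom_eq_two_mul_choose, hc, pow_two]
  have : (((q + 1) * c : ℕ) : ℤ) + ((q + 1 : ℕ) : ℤ) = ((q + 1 : ℕ) : ℤ) * ((c : ℤ) + 1) := by
    push_cast; ring
  rw [this]
  exact mul_dvd_mul_left _ h7

lemma catalan_sum (n : ℕ) :
    2 * ∑ k ∈ Finset.range n, ((2 * k).choose k : ℚ) / (k + 1)
      = 3 * ∑ k ∈ Finset.range (n + 1), ((2 * k).choose k : ℚ) + 1 - 4 * ((2 * n).choose n : ℚ) := by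
  induction n with
  | zero => norm_num
  | succ n ih =>
    rw [Finset.sum_range_succ, mul_add, ih, Finset.sum_range_succ _ (n + 1)]
    have h := Nat.succ_mul_centralBinom_succ n
    rw [Nat.centralBinom_eq_two_mul_choose, Nat.centralBinom_eq_two_mul_choose] at h
    have h' : ((n : ℚ) + 1) * ((2 * (n + 1)).choose (n + 1) : ℚ)
        = 2 * (2 * n + 1) * ((2 * n).choose n : ℚ) := by exact_mod_cast h
    have hn : (n : ℚ) + 1 ≠ 0 := by positivity
    field_simp
    linear_combination h'

theorem truncated_catalan_sum (p : ℕ) (hp : p.Prime) (hp5 : 5 ≤ p) :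
    ratCongr p 2
      (∑ k ∈ Finset.range (p - 1), ((2 * k).choose k : ℚ) / (k + 1))
      (3 / 2 * (leg3 p : ℚ) + 1 / 2 + 2 * p) := by
  have hleg : leg3 p = chi3 p := by
    have h3 : p % 3 ≠ 0 := fun h => by
      have := (Nat.prime_dvd_prime_iff_eq Nat.prime_three hp).1 (Nat.dvd_of_mod_eq_zero h)
      omega
    unfold leg3 chi3
    have h : p % 3 = 1 ∨ p % 3 = 2 := by omega
    rcases h with h | h <;> simp [h]
  obtain ⟨a, ha⟩ := central_sum_mod p hp hp5
  obtain ⟨q, rfl⟩ : ∃ q, p = q + 1 := ⟨p - 1, by omega⟩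
  obtain ⟨b, hb⟩ := central_last q hp hp5
  refine ⟨3 * a - 4 * b, 2, ?_, ?_⟩
  · intro h
    have := Int.le_of_dvd (by norm_num) h
    push_cast at this
    omega
  · have hc := catalan_sum q
    rw [hleg]
    have ha' : ∑ k ∈ Finset.range (q + 1), ((2 * k).choose k : ℚ) - (chi3 (q + 1) : ℚ)
        = ((q + 1 : ℕ) : ℚ) ^ 2 * a := by exact_mod_cast ha
    have hb' : ((2 * q).choose q : ℚ) + ((q + 1 : ℕ) : ℚ) = ((q + 1 : ℕ) : ℚ) ^ 2 * b := by
      exact_mod_cast hb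
    rw [Nat.add_sub_cancel]
    push_cast at *
    linear_combination hc + 3 * ha' - 4 * hb'
end

section
/- Let p ≥ 5 be a prime. Then p·∑_{k=0}^{p-2} (C(2k,k)/(k+1))·(H_k - H_{2k}) ≡ C(2p-2,p-1)/p + (1/(p+1))·∑_{k=0}^{p} (-1)^k·C(p+1,k)·C(2p-2k,p-k) (mod p²), as a congruence of rational numbers. -/
/-- The `n`-th harmonic number `H_n = ∑_{j=1}^n 1/j`, with `H_0 = 0`. -/
def H (n : ℕ) : ℚ := ∑ j ∈ Finset.range n, 1 / (j + 1 : ℚ)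

/-- The alternating diagonal binomial sum. -/
def altU (m : ℕ) : ℤ := ∑ n ∈ Finset.range (m + 1), (-1 : ℤ) ^ n * ((m - n).choose n : ℤ)

lemma altU_rec (m : ℕ) : altU (m + 2) = altU (m + 1) - altU m := by
  unfold altU
  rw [Finset.sum_range_succ', Finset.sum_range_succ _ (m + 1), Finset.sum_range_succ' _ (m + 1)]
  have h : ∑ k ∈ Finset.range (m + 1), (-1 : ℤ) ^ (k + 1) * ((m + 2 - (k + 1)).choose (k + 1) : ℤ)
      = ∑ k ∈ Finset.range (m + 1), (-1 : ℤ) ^ (k + 1) * ((m + 1 - (k + 1)).choose (k + 1) : ℤ)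
        - ∑ k ∈ Finset.range (m + 1), (-1 : ℤ) ^ k * ((m - k).choose k : ℤ) := by
    rw [← Finset.sum_sub_distrib]
    refine Finset.sum_congr rfl fun k hk => ?_
    have hk' : k ≤ m := by have := Finset.mem_range.1 hk; omega
    have e1 : m + 2 - (k + 1) = (m - k) + 1 := by omega
    have e2 : m + 1 - (k + 1) = m - k := by omega
    rw [e1, e2, Nat.choose_succ_succ]
    push_cast
    ring
  rw [h]
  have e3 : m + 2 - (m + 1 + 1) = 0 := by omega
  rw [e3]
  simp
  ring

lemma altU_six (m : ℕ) : altU (m + 6) = altU m := by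
  have h1 := altU_rec m
  have h2 := altU_rec (m + 1)
  have h3 := altU_rec (m + 2)
  have h4 := altU_rec (m + 3)
  have h5 := altU_rec (m + 4)
  simp only [Nat.add_assoc, Nat.reduceAdd] at *
  linarith

lemma altU_add_six_mul (m q : ℕ) : altU (m + 6 * q) = altU m := by
  induction q with
  | zero => simp
  | succ q ih =>
    have : m + 6 * (q + 1) = (m + 6 * q) + 6 := by ring
    rw [this, altU_six, ih]

lemma altU_vals : altU 0 = 1 ∧ altU 2 = 0 ∧ altU 4 = -1 ∧ altU 6 = 1 := by
  refine ⟨?_, ?_, ?_, ?_⟩ <;> decide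

/-- Explicit evaluation of the shifted sum. -/
lemma shifted_sum (p : ℕ) (hp : 2 ≤ p) :
    ∑ k ∈ Finset.range (p - 1), (-1 : ℤ) ^ k * (((p - k).choose (k + 1) : ℤ)
      + ((p - 1 - k).choose k : ℤ)) = 1 - altU (p + 1) + altU (p - 1) := by
  obtain ⟨q, rfl⟩ : ∃ q, p = q + 1 := ⟨p - 1, by omega⟩
  have hq : 1 ≤ q := by omega
  unfold altU
  simp only [Nat.add_sub_cancel]
  rw [Finset.sum_range_succ' _ (q + 1 + 1), Finset.sum_range_succ _ (q + 1),
    Finset.sum_range_succ _ q, Finset.sum_range_succ (fun n => (-1 : ℤ) ^ n * ((q - n).choose n : ℤ)) q]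
  have e1 : q + 1 + 1 - (q + 1 + 1) = 0 := by omega
  have e2 : q + 1 + 1 - (q + 1) = 1 := by omega
  have e3 : (1 : ℕ).choose (q + 1) = 0 := Nat.choose_eq_zero_of_lt (by omega)
  have e4 : (0 : ℕ).choose q = 0 := Nat.choose_eq_zero_of_lt (by omega)
  rw [e1, e2, e3, Nat.sub_self, e4]
  have h : ∑ k ∈ Finset.range q, (-1 : ℤ) ^ (k + 1) * ((q + 1 + 1 - (k + 1)).choose (k + 1) : ℤ)
      = - ∑ k ∈ Finset.range q, (-1 : ℤ) ^ k * ((q + 1 - k).choose (k + 1) : ℤ) := by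
    rw [← Finset.sum_neg_distrib]
    refine Finset.sum_congr rfl fun k hk => ?_
    have e1 : q + 1 + 1 - (k + 1) = q + 1 - k := by omega
    rw [e1]; ring
  rw [h]
  simp [mul_add, Finset.sum_add_distrib]

lemma prod_desc (n m : ℕ) : ∏ j ∈ Finset.range m, ((n : ℤ) - j) = (n.descFactorial m : ℤ) := by
  induction m with
  | zero => simp
  | succ m ih =>
    rw [Finset.prod_range_succ, ih, Nat.descFactorial_succ]
    rcases le_or_gt m n with h | h
    · push_cast [Nat.cast_sub h]; ring
    · simp [Nat.descFactorial_of_lt h]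

lemma shifted_term (p k : ℕ) (hk : k + 1 < p) :
    (p + 1 : ℤ) * ∏ j ∈ Finset.range k, ((k : ℤ) + 1 + j - p) =
      ((k + 1).factorial : ℤ) * ((-1 : ℤ) ^ k * (((p - k).choose (k + 1) : ℤ)
      + ((p - 1 - k).choose k : ℤ))) := by
  obtain ⟨n, rfl⟩ : ∃ n, p = n + k + 1 := ⟨p - 1 - k, by omega⟩
  have h1 : ∏ j ∈ Finset.range k, ((k : ℤ) + 1 + j - (n + k + 1 : ℕ))
      = (-1) ^ k * ((k.factorial * n.choose k : ℕ) : ℤ) := by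
    rw [← Nat.descFactorial_eq_factorial_mul_choose, ← prod_desc]
    have : ((-1 : ℤ)) ^ k = ∏ j ∈ Finset.range k, (-1 : ℤ) := by simp
    rw [this, ← Finset.prod_mul_distrib]
    refine Finset.prod_congr rfl fun j _ => ?_
    push_cast; ring
  have h2 := Nat.add_one_mul_choose_eq n k
  have e1 : n + k + 1 - k = n + 1 := by omega
  have e2 : n + k + 1 - 1 - k = n := by omega
  rw [h1, e1, e2, Nat.factorial_succ]
  zify at h2
  push_cast
  linear_combination ((-1 : ℤ) ^ k * (k.factorial : ℤ)) * h2

/-- First order expansion of the shifted product. -/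
lemma prod_expand (p k n : ℕ) : ∃ e z : ℤ,
    ∏ j ∈ Finset.range n, ((k : ℤ) + 1 + j - p)
      = ((k + 1).ascFactorial n : ℤ) - p * e + p ^ 2 * z ∧
    (e : ℚ) = ((k + 1).ascFactorial n : ℚ) * (H (k + n) - H k) := by
  induction n with
  | zero => exact ⟨0, 0, by simp, by simp⟩
  | succ n ih =>
    obtain ⟨e, z, h1, h2⟩ := ih
    refine ⟨(k + 1 + n) * e + ((k + 1).ascFactorial n : ℤ), (k + 1 + n) * z + e - p * z, ?_, ?_⟩
    · rw [Finset.prod_range_succ, h1, Nat.ascFactorial_succ]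
      push_cast
      ring
    · have h3 : H (k + (n + 1)) = H (k + n) + 1 / ((k : ℚ) + n + 1) := by
        unfold H
        rw [← Nat.add_assoc, Finset.sum_range_succ]
        push_cast; rfl
      have h4 : (k : ℚ) + n + 1 ≠ 0 := by positivity
      rw [h3, Nat.ascFactorial_succ]
      push_cast
      rw [h2]
      field_simp
      ring

open Polynomial in
lemma phi_coeff (G : ℤ[X]) (n : ℕ) : ((1 + X + X ^ 2) * G).coeff (n + 2)
    = G.coeff (n + 2) + G.coeff (n + 1) + G.coeff n := by
  rw [add_mul, add_mul, one_mul, coeff_add, coeff_add, coeff_X_mul, coeff_X_pow_mul]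

open Polynomial in
lemma phi_coeff_zero (G : ℤ[X]) : ((1 + X + X ^ 2) * G).coeff 0 = G.coeff 0 := by
  simp [mul_coeff_zero]

open Polynomial in
lemma phi_coeff_one (G : ℤ[X]) : ((1 + X + X ^ 2) * G).coeff 1 = G.coeff 1 + G.coeff 0 := by
  have : (1 + X + X ^ 2) * G = G + X * G + X * (X * G) := by ring
  rw [this, coeff_add, coeff_add, show (1 : ℕ) = 0 + 1 from rfl, coeff_X_mul, coeff_X_mul]
  simp

open Polynomial in
lemma G_coeff (p : ℕ) (G : ℤ[X]) (hG : (1 + X + X ^ 2) * G = 1 + X ^ p + X ^ (2 * p)) (k : ℕ) :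
    (3 * k < p → G.coeff (3 * k) = 1) ∧ (3 * k + 1 < p → G.coeff (3 * k + 1) = -1) ∧
      (3 * k + 2 < p → G.coeff (3 * k + 2) = 0) := by
  have hc : ∀ n, n + 1 < p → (1 + X ^ p + X ^ (2 * p) : ℤ[X]).coeff (n + 1) = 0 := by
    intro n hn
    have h1 : n + 1 ≠ p := by omega
    have h2 : n + 1 ≠ 2 * p := by omega
    simp [coeff_X_pow, h1, h2, coeff_one]
  have hr : ∀ n, n + 2 < p → G.coeff (n + 2) + G.coeff (n + 1) + G.coeff n = 0 := by
    intro n hn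
    rw [← phi_coeff, hG]; exact hc (n + 1) hn
  induction k with
  | zero =>
    have h0 : 0 < p → G.coeff 0 = 1 := by
      intro h
      rw [← phi_coeff_zero, hG]
      simp [coeff_X_pow, h.ne, h.ne']
    have h1 : 1 < p → G.coeff 1 = -1 := by
      intro h
      have := phi_coeff_one G
      rw [hG, hc 0 h, h0 (by omega)] at this
      linarith
    refine ⟨h0, h1, fun h => ?_⟩
    have h2 := hr 0 h
    rw [h0 (by omega), h1 (by omega)] at h2
    simpa using h2
  | succ k ih =>
    obtain ⟨_, i1, i2⟩ := ih
    have h0 : 3 * k + 3 < p → G.coeff (3 * k + 3) = 1 := by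
      intro h
      have := hr (3 * k + 1) (by omega)
      rw [i1 (by omega), show 3 * k + 1 + 1 = 3 * k + 2 by ring, i2 (by omega)] at this
      rw [show 3 * k + 3 = 3 * k + 1 + 2 by ring]; linarith
    have h1 : 3 * k + 4 < p → G.coeff (3 * k + 4) = -1 := by
      intro h
      have := hr (3 * k + 2) (by omega)
      rw [i2 (by omega), show 3 * k + 2 + 1 = 3 * k + 3 by ring, h0 (by omega)] at this
      rw [show 3 * k + 4 = 3 * k + 2 + 2 by ring]; linarith
    have h2 : 3 * k + 5 < p → G.coeff (3 * k + 5) = 0 := by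
      intro h
      have := hr (3 * k + 3) (by omega)
      rw [h0 (by omega), show 3 * k + 3 + 1 = 3 * k + 4 by ring, h1 (by omega)] at this
      rw [show 3 * k + 5 = 3 * k + 3 + 2 by ring]; linarith
    exact ⟨h0, h1, h2⟩

open Polynomial in
lemma phi_dvd (p : ℕ) (hp3 : ¬ 3 ∣ p) :
    (1 + X + X ^ 2 : ℤ[X]) ∣ 1 + X ^ p + X ^ (2 * p) := by
  have h3 : (1 + X + X ^ 2 : ℤ[X]) ∣ X ^ 3 - 1 := ⟨X - 1, by ring⟩
  have hq : ∀ q : ℕ, (1 + X + X ^ 2 : ℤ[X]) ∣ (X ^ 3) ^ q - 1 := fun q =>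
    h3.trans (by simpa using sub_dvd_pow_sub_pow (X ^ 3 : ℤ[X]) 1 q)
  have : p % 3 = 1 ∨ p % 3 = 2 := by omega
  rcases this with h | h
  · obtain ⟨q, rfl⟩ : ∃ q, p = 3 * q + 1 := ⟨p / 3, by omega⟩
    obtain ⟨a, ha⟩ := hq q
    obtain ⟨b, hb⟩ := hq (2 * q)
    refine ⟨1 + X * a + X ^ 2 * b, ?_⟩
    have e1 : (X : ℤ[X]) ^ (3 * q + 1) = (X ^ 3) ^ q * X := by ring
    have e2 : (X : ℤ[X]) ^ (2 * (3 * q + 1)) = (X ^ 3) ^ (2 * q) * X ^ 2 := by ring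
    rw [e1, e2]
    linear_combination X * ha + X ^ 2 * hb
  · obtain ⟨q, rfl⟩ : ∃ q, p = 3 * q + 2 := ⟨p / 3, by omega⟩
    obtain ⟨a, ha⟩ := hq q
    obtain ⟨b, hb⟩ := hq (2 * q + 1)
    refine ⟨1 + X ^ 2 * a + X * b, ?_⟩
    have e1 : (X : ℤ[X]) ^ (3 * q + 2) = (X ^ 3) ^ q * X ^ 2 := by ring
    have e2 : (X : ℤ[X]) ^ (2 * (3 * q + 2)) = (X ^ 3) ^ (2 * q + 1) * X := by ring
    rw [e1, e2]
    linear_combination X ^ 2 * ha + X * hb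

lemma catalan_eq_sub (k : ℕ) :
    (catalan k : ℤ) = ((2 * k).choose k : ℤ) - (if k = 0 then 0 else ((2 * k).choose (k - 1) : ℤ)) := by
  rcases k with _ | k
  · simp
  · have h1 := succ_mul_catalan_eq_centralBinom (k + 1)
    rw [Nat.centralBinom_eq_two_mul_choose] at h1
    have h2 := Nat.choose_succ_right_eq (2 * (k + 1)) k
    rw [show 2 * (k + 1) - k = k + 2 by omega] at h2
    zify at h1 h2
    simp only [Nat.add_sub_cancel, Nat.succ_ne_zero, if_false]
    have h3 : ((k : ℤ) + 2) ≠ 0 := by positivity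
    apply mul_left_cancel₀ h3
    linear_combination h1 - h2

open Polynomial in
lemma coeff_catalan (p k : ℕ) (hk : k < p) :
    ((1 - X) * ((((1 + X) ^ 2) ^ k) * X ^ (p - 1 - k)) : ℤ[X]).coeff (p - 1) = catalan k := by
  have e : ((1 - X) * ((((1 + X) ^ 2) ^ k) * X ^ (p - 1 - k)) : ℤ[X])
      = ((1 + X) ^ (2 * k) - X * (1 + X) ^ (2 * k)) * X ^ (p - 1 - k) := by
    rw [pow_mul]; ring
  have e2 : p - 1 = k + (p - 1 - k) := by omega
  rw [e]
  conv_lhs => rw [e2]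
  rw [show k + (p - 1 - k) - k = p - 1 - k by omega, coeff_mul_X_pow, coeff_sub,
    coeff_one_add_X_pow, catalan_eq_sub]
  rcases k with _ | k
  · simp
  · rw [coeff_X_mul, coeff_one_add_X_pow]; simp

open Polynomial in
lemma catalan_sum_mod (p : ℕ) (hp : p.Prime) (hp5 : 5 ≤ p) :
    ∃ z : ℤ, ∑ k ∈ Finset.range p, (catalan k : ℤ)
      = (if p % 3 = 1 then 1 else -2) + p ^ 2 * z := by
  have hp3 : ¬ 3 ∣ p := by
    intro h
    have := (Nat.prime_dvd_prime_iff_eq Nat.prime_three hp).1 h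
    omega
  have hodd : Odd p := hp.odd_of_ne_two (by omega)
  obtain ⟨G, hG⟩ := phi_dvd p hp3
  have hF : (1 + X + X ^ 2 : ℤ[X]) ∣ (1 + X) ^ p - 1 - X ^ p := by
    have h1 : (1 + X + X ^ 2 : ℤ[X]) ∣ (1 + X) ^ p - (-X ^ 2) ^ p := by
      have := sub_dvd_pow_sub_pow (1 + X : ℤ[X]) (-X ^ 2) p
      rwa [sub_neg_eq_add] at this
    rw [hodd.neg_pow] at h1
    have h2 := dvd_sub h1 (phi_dvd p hp3)
    have e : (1 + X) ^ p - -(X ^ 2) ^ p - (1 + X ^ p + X ^ (2 * p))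
      = ((1 + X) ^ p - 1 - X ^ p : ℤ[X]) := by ring
    rwa [e] at h2
  obtain ⟨F, hF⟩ := hF
  obtain ⟨r, hr⟩ := exists_add_pow_prime_eq hp (1 : ℤ[X]) X
  have hprime : Prime (C (p : ℤ) : ℤ[X]) := prime_C_iff.2 (Nat.prime_iff_prime_int.1 hp)
  have hpF : C (p : ℤ) ∣ F := by
    have h1 : C (p : ℤ) ∣ (1 + X + X ^ 2) * F := by
      rw [← hF]
      refine ⟨X * r, ?_⟩
      rw [hr]; simp; ring
    rcases hprime.dvd_or_dvd h1 with h | h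
    · exfalso
      have := (C_dvd_iff_dvd_coeff _ _).1 h 0
      simp at this
      have h2 : (p : ℤ) ≤ 1 := Int.le_of_dvd one_pos this
      omega
    · exact h
  obtain ⟨f, rfl⟩ := hpF
  set F := C (p : ℤ) * f with hFdef
  have hmon : (1 + X + X ^ 2 : ℤ[X]).Monic := by monicity!
  have hdeg : (1 + X + X ^ 2 : ℤ[X]).natDegree = 2 := by compute_degree!
  -- high coefficients of F vanish
  have hEc : ∀ n, p ≤ n → ((1 + X) ^ p - 1 - X ^ p : ℤ[X]).coeff n = 0 := by
    intro n hn
    rw [coeff_sub, coeff_sub, coeff_one_add_X_pow, coeff_one, coeff_X_pow]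
    rcases eq_or_lt_of_le hn with h | h
    · subst h; simp; omega
    · rw [Nat.choose_eq_zero_of_lt h]
      have : n ≠ 0 := by omega
      have : n ≠ p := by omega
      simp [*]
  have hFdeg : ∀ n, p - 2 ≤ n → F.coeff n = 0 := by
    intro n hn
    by_cases hF0 : F = 0
    · simp [hF0]
    apply coeff_eq_zero_of_natDegree_lt
    have h1 := hmon.natDegree_mul' hF0
    rw [hdeg] at h1
    by_contra hcon
    push Not at hcon
    have h2 := hEc (2 + F.natDegree) (by omega)
    rw [hF, ← h1, coeff_natDegree, leadingCoeff_eq_zero] at h2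
    rcases mul_eq_zero.1 h2 with h | h
    · exact hmon.ne_zero h
    · exact hF0 h
  -- the polynomial identity
  have hgeom := geom_sum₂_mul ((1 + X) ^ 2 : ℤ[X]) X p
  set P : ℤ[X] := ∑ i ∈ Finset.range p, ((1 + X) ^ 2) ^ i * X ^ (p - 1 - i) with hP
  have hPeq : P = G + 2 * F + X ^ p * (2 * F) + (1 + X + X ^ 2) * F ^ 2 := by
    apply mul_left_cancel₀ hmon.ne_zero
    have e : ((1 + X) ^ 2 : ℤ[X]) ^ p = ((1 + X) ^ p) ^ 2 := pow_right_comm _ _ _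
    rw [e] at hgeom
    have e2 : ((1 + X) ^ p : ℤ[X]) = 1 + X ^ p + (1 + X + X ^ 2) * F := by rw [← hF]; ring
    rw [e2] at hgeom
    linear_combination hgeom + hG
  have hS : ∑ k ∈ Finset.range p, (catalan k : ℤ) = ((1 - X) * P).coeff (p - 1) := by
    rw [hP, Finset.mul_sum, finsetSum_coeff]
    exact Finset.sum_congr rfl fun k hk => (coeff_catalan p k (Finset.mem_range.1 hk)).symm
  have hcoef : ∀ Q : ℤ[X], ((1 - X) * Q).coeff (p - 1) = Q.coeff (p - 1) - Q.coeff (p - 2) := by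
    intro Q
    rw [sub_mul, one_mul, coeff_sub, show p - 1 = (p - 2) + 1 by omega, coeff_X_mul]
  have hPc : ∀ n, n = p - 1 ∨ n = p - 2 →
      P.coeff n = G.coeff n + p ^ 2 * ((1 + X + X ^ 2) * f ^ 2).coeff n := by
    intro n hn
    have e : (1 + X + X ^ 2) * F ^ 2 = C ((p : ℤ) ^ 2) * ((1 + X + X ^ 2) * f ^ 2) := by
      rw [hFdef, C_pow]; ring
    rw [hPeq, coeff_add, coeff_add, coeff_add, coeff_X_pow_mul', if_neg (by omega), e, coeff_C_mul,
      show (2 : ℤ[X]) = C 2 from rfl, coeff_C_mul, hFdeg n (by omega)]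
    ring
  rw [hS, hcoef, hPc _ (Or.inl rfl), hPc _ (Or.inr rfl)]
  refine ⟨((1 + X + X ^ 2) * f ^ 2).coeff (p - 1) - ((1 + X + X ^ 2) * f ^ 2).coeff (p - 2), ?_⟩
  have key : G.coeff (p - 1) - G.coeff (p - 2) = if p % 3 = 1 then 1 else -2 := by
    split_ifs with h
    · obtain ⟨q, hq⟩ : ∃ q, p = 3 * q + 4 := ⟨p / 3 - 1, by omega⟩
      have h1 := (G_coeff p G hG.symm (q + 1)).1 (by omega)
      have h2 := (G_coeff p G hG.symm q).2.2 (by omega)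
      rw [show p - 1 = 3 * (q + 1) by omega, show p - 2 = 3 * q + 2 by omega, h1, h2]; norm_num
    · obtain ⟨q, hq⟩ : ∃ q, p = 3 * q + 2 := ⟨p / 3, by omega⟩
      have h1 := (G_coeff p G hG.symm q).2.1 (by omega)
      have h2 := (G_coeff p G hG.symm q).1 (by omega)
      rw [show p - 1 = 3 * q + 1 by omega, show p - 2 = 3 * q by omega, h1, h2]; norm_num
  linear_combination key

open Polynomial in
lemma trinomial_mod (p : ℕ) (hp : p.Prime) (hp5 : 5 ≤ p) :
    ∃ z : ℤ, ((1 + X + X ^ 2 : ℤ[X]) ^ p).coeff p = 1 + p ^ 2 * z := by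
  have hp3 : ¬ 3 ∣ p := by
    intro h
    have := (Nat.prime_dvd_prime_iff_eq Nat.prime_three hp).1 h
    omega
  have hodd : Odd p := hp.odd_of_ne_two (by omega)
  have hp0 : p ≠ 0 := by omega
  obtain ⟨r, hr⟩ := exists_add_pow_prime_eq hp (1 : ℤ[X]) (-X)
  obtain ⟨s, hs⟩ := exists_add_pow_prime_eq hp (1 + X : ℤ[X]) (X ^ 2)
  obtain ⟨t, ht⟩ := exists_add_pow_prime_eq hp (1 : ℤ[X]) X
  rw [hodd.neg_pow, one_pow] at hr
  have hprod : ((1 + -X) ^ p * (1 + X + X ^ 2) ^ p : ℤ[X]) = expand ℤ 3 ((1 + -X) ^ p) := by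
    rw [← mul_pow, map_pow]
    congr 1
    simp
    ring
  set a : ℤ[X] := -X * r with ha
  set b : ℤ[X] := (1 + X) * X ^ 2 * s + X * t with hb
  have h1 : ((1 + -X) ^ p : ℤ[X]) = 1 - X ^ p + C (p : ℤ) * a := by
    rw [hr, ha]; simp; ring
  have h2 : ((1 + X + X ^ 2) ^ p : ℤ[X]) = 1 + X ^ p + X ^ (2 * p) + C (p : ℤ) * b := by
    rw [hs, ht, hb]; simp; ring
  have hexp : (((1 + -X) ^ p * (1 + X + X ^ 2) ^ p : ℤ[X])).coeff p = 0 := by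
    rw [hprod, coeff_expand (by norm_num), if_neg hp3]
  have ha0 : a.coeff 0 = 0 := by simp [ha]
  have hb0 : b.coeff 0 = 0 := by simp [hb]
  have hap : (p : ℤ) * a.coeff p = 0 := by
    have e : C (p : ℤ) * a = (-1) * (X - C 1) ^ p - 1 + X ^ p := by
      have : ((1 + -X) ^ p : ℤ[X]) = (-1) * (X - C 1) ^ p := by
        rw [show (1 + -X : ℤ[X]) = -(X - C 1) by simp [sub_eq_neg_add, add_comm], hodd.neg_pow]; ring
      rw [← this, h1]; ring
    have hm : ((X - C (1 : ℤ)) ^ p).coeff p = 1 := by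
      have h := ((monic_X_sub_C (1 : ℤ)).pow p).coeff_natDegree
      rwa [(monic_X_sub_C (1 : ℤ)).natDegree_pow, natDegree_X_sub_C, mul_one] at h
    rw [← coeff_C_mul, e, coeff_add, coeff_sub, show (-1 : ℤ[X]) = C (-1) by simp, coeff_C_mul, hm,
      coeff_one, coeff_X_pow]
    simp [hp0]
  have e3 : ((1 + -X) ^ p * (1 + X + X ^ 2) ^ p : ℤ[X]) =
      1 + X ^ p * (-X ^ (2 * p)) + C (p : ℤ) * a + X ^ p * (C (p : ℤ) * a)
        + X ^ p * (X ^ p * (C (p : ℤ) * a)) + C (p : ℤ) * b - X ^ p * (C (p : ℤ) * b)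
        + C ((p : ℤ) ^ 2) * (a * b) := by
    rw [h1, h2, C_pow]; ring
  have hx : ∀ Q : ℤ[X], (X ^ p * Q).coeff p = Q.coeff 0 := by
    intro Q
    rw [coeff_X_pow_mul', if_pos le_rfl, Nat.sub_self]
  rw [e3] at hexp
  simp only [coeff_add, coeff_sub, hx, coeff_C_mul, ha0, hb0, hap, coeff_one] at hexp
  have hX0 : (X ^ p : ℤ[X]).coeff 0 = 0 := by simp [hp0.symm]
  have hX2 : (-X ^ (2 * p) : ℤ[X]).coeff 0 = 0 := by simp [hp0, hp0.symm]
  rw [hX2, mul_coeff_zero, hX0] at hexp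
  refine ⟨-(a * b).coeff p, ?_⟩
  rw [h2]
  simp only [coeff_add, coeff_C_mul, coeff_one, coeff_X_pow]
  have : p ≠ 2 * p := by omega
  simp [hp0, this] at hexp ⊢
  linear_combination hexp

open Polynomial in
lemma trinomial_sum (p : ℕ) : ((1 + X + X ^ 2 : ℤ[X]) ^ p).coeff p
    = ∑ k ∈ Finset.range (p + 1), (-1 : ℤ) ^ k * (p.choose k : ℤ) * ((p - k).centralBinom : ℤ) := by
  have e : (1 + X + X ^ 2 : ℤ[X]) = (-X) + (1 + X) ^ 2 := by ring
  rw [e, add_pow, finsetSum_coeff]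
  refine Finset.sum_congr rfl fun k hk => ?_
  have hk' : k ≤ p := by have := Finset.mem_range.1 hk; omega
  have e2 : ((-X) ^ k * ((1 + X) ^ 2) ^ (p - k) * (p.choose k : ℤ[X]) : ℤ[X])
      = C ((-1 : ℤ) ^ k * (p.choose k : ℤ)) * (X ^ k * (1 + X) ^ (2 * (p - k))) := by
    rw [neg_pow, pow_mul]; simp; ring
  rw [e2, coeff_C_mul, coeff_X_pow_mul', if_pos hk', coeff_one_add_X_pow,
    Nat.centralBinom_eq_two_mul_choose]

lemma choose_pred_mod (p : ℕ) (hp : p.Prime) (j : ℕ) (hj : j < p) :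
    ∃ z : ℤ, (-1 : ℤ) ^ j * ((p - 1).choose j : ℤ) = 1 + p * z := by
  induction j with
  | zero => exact ⟨0, by simp⟩
  | succ j ih =>
    obtain ⟨z, hz⟩ := ih (by omega)
    obtain ⟨c, hc⟩ := hp.dvd_choose_self (Nat.succ_ne_zero j) hj
    have h := Nat.choose_succ_succ (p - 1) j
    rw [show (p - 1).succ = p by have := hp.pos; omega, hc] at h
    zify at h
    refine ⟨z - (-1) ^ j * c, ?_⟩
    rw [pow_succ]
    simp only [Nat.succ_eq_add_one] at h
    linear_combination hz + (-1) ^ j * h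

lemma N_mod (p : ℕ) (hp : p.Prime) (hp5 : 5 ≤ p) :
    ∃ z : ℤ, ∑ k ∈ Finset.range p, (-1 : ℤ) ^ k * (p.choose k : ℤ) * ((p - 1 - k).centralBinom : ℤ)
      = p * ∑ k ∈ Finset.range p, (catalan k : ℤ) + p ^ 2 * z := by
  have hodd : Odd p := hp.odd_of_ne_two (by omega)
  have hev : Even (p - 1) := by
    obtain ⟨m, hm⟩ := hodd
    exact ⟨m, by omega⟩
  rw [← Finset.sum_range_reflect, Finset.mul_sum]
  have hterm : ∀ j, ∃ z : ℤ, j ∈ Finset.range p → (-1 : ℤ) ^ (p - 1 - j) * (p.choose (p - 1 - j) : ℤ) *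
      ((p - 1 - (p - 1 - j)).centralBinom : ℤ) = p * (catalan j : ℤ) + p ^ 2 * z := by
    intro j
    by_cases hj : j < p
    swap
    · exact ⟨0, fun h => absurd (Finset.mem_range.1 h) hj⟩
    obtain ⟨z, hz⟩ := choose_pred_mod p hp j hj
    refine ⟨z * catalan j, fun _ => ?_⟩
    have e1 : p - 1 - (p - 1 - j) = j := by omega
    have e2 : p.choose (p - 1 - j) = p.choose (j + 1) := by
      rw [← Nat.choose_symm (show j + 1 ≤ p by omega)]
      congr 1; omega
    have e3 : (-1 : ℤ) ^ (p - 1 - j) = (-1) ^ j := by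
      have h : (-1 : ℤ) ^ (p - 1 - j) * (-1) ^ j = 1 := by
        rw [← pow_add, show p - 1 - j + j = p - 1 by omega, hev.neg_one_pow]
      have h' : (-1 : ℤ) ^ j * (-1) ^ j = 1 := by rw [← mul_pow]; simp
      calc (-1 : ℤ) ^ (p - 1 - j) = (-1 : ℤ) ^ (p - 1 - j) * ((-1) ^ j * (-1) ^ j) := by rw [h', mul_one]
        _ = _ := by rw [← mul_assoc, h, one_mul]
    have h4 := Nat.add_one_mul_choose_eq (p - 1) j
    rw [show p - 1 + 1 = p by omega] at h4
    have h5 := succ_mul_catalan_eq_centralBinom j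
    rw [e1, e2, e3, ← h5]
    zify at h4
    push_cast
    linear_combination (-(-1 : ℤ) ^ j * catalan j) * h4 + (p * catalan j : ℤ) * hz
  choose z hz using hterm
  refine ⟨∑ j ∈ Finset.range p, z j, ?_⟩
  rw [Finset.mul_sum, ← Finset.sum_add_distrib]
  exact Finset.sum_congr rfl fun j hj => hz j hj

lemma T_eq (p : ℕ) : ∑ k ∈ Finset.range (p + 1),
    (-1 : ℤ) ^ k * ((p + 1).choose k : ℤ) * ((2 * p - 2 * k).choose (p - k) : ℤ)
    = ∑ k ∈ Finset.range (p + 1), (-1 : ℤ) ^ k * (p.choose k : ℤ) * ((p - k).centralBinom : ℤ)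
    - ∑ k ∈ Finset.range p, (-1 : ℤ) ^ k * (p.choose k : ℤ) * ((p - 1 - k).centralBinom : ℤ) := by
  have h : ∀ k, (2 * p - 2 * k).choose (p - k) = (p - k).centralBinom := by
    intro k
    rw [Nat.centralBinom_eq_two_mul_choose, Nat.mul_sub]
  simp only [h]
  rw [Finset.sum_range_succ', Finset.sum_range_succ' _ p]
  have h2 : ∑ k ∈ Finset.range p, (-1 : ℤ) ^ (k + 1) * ((p + 1).choose (k + 1) : ℤ) * ((p - (k + 1)).centralBinom : ℤ)
    = ∑ k ∈ Finset.range p, (-1 : ℤ) ^ (k + 1) * (p.choose (k + 1) : ℤ) * ((p - (k + 1)).centralBinom : ℤ)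
     - ∑ k ∈ Finset.range p, (-1 : ℤ) ^ k * (p.choose k : ℤ) * ((p - 1 - k).centralBinom : ℤ) := by
    rw [← Finset.sum_sub_distrib]
    refine Finset.sum_congr rfl fun k _ => ?_
    rw [Nat.choose_succ_succ, show p - (k + 1) = p - 1 - k by omega]
    push_cast
    ring
  rw [h2]
  simp
  ring

lemma main_int (p : ℕ) (hp : p.Prime) (hp5 : 5 ≤ p) : ∃ y : ℤ,
    (1 - altU (p + 1) + altU (p - 1)) - (p + 1) * ∑ k ∈ Finset.range p, (catalan k : ℤ)
    - ∑ k ∈ Finset.range (p + 1),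
      (-1 : ℤ) ^ k * ((p + 1).choose k : ℤ) * ((2 * p - 2 * k).choose (p - k) : ℤ) = p ^ 2 * y := by
  obtain ⟨z1, h1⟩ := catalan_sum_mod p hp hp5
  obtain ⟨z2, h2⟩ := trinomial_mod p hp hp5
  obtain ⟨z3, h3⟩ := N_mod p hp hp5
  rw [trinomial_sum] at h2
  rw [T_eq, h2, h3]
  obtain ⟨u0, u2, u4, u6⟩ := altU_vals
  have hU : altU (p - 1) - altU (p + 1) = if p % 3 = 1 then 1 else -2 := by
    have hp2 : p % 2 = 1 := Nat.odd_iff.1 (hp.odd_of_ne_two (by omega))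
    have hp3 : p % 3 ≠ 0 := by
      intro h
      have := (Nat.prime_dvd_prime_iff_eq Nat.prime_three hp).1 (Nat.dvd_of_mod_eq_zero h)
      omega
    split_ifs with h
    · rw [show p - 1 = 0 + 6 * (p / 6) by omega, show p + 1 = 2 + 6 * (p / 6) by omega,
        altU_add_six_mul, altU_add_six_mul, u0, u2]; norm_num
    · rw [show p - 1 = 4 + 6 * (p / 6) by omega, show p + 1 = 6 + 6 * (p / 6) by omega,
        altU_add_six_mul, altU_add_six_mul, u4, u6]; norm_num
  refine ⟨z3 - z2 - z1, ?_⟩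
  linear_combination hU - h1

lemma term_eq (p k : ℕ) (hk : k + 1 < p) : ∃ w : ℤ,
    ((p : ℚ) * (((2 * k).choose k : ℚ) / (k + 1) * (H k - H (2 * k))))
      * ((p + 1) * ((p - 1).factorial : ℚ)) =
    ((p - 1).factorial : ℚ) * (((-1 : ℤ) ^ k * (((p - k).choose (k + 1) : ℤ)
      + ((p - 1 - k).choose k : ℤ)) : ℤ) - (p + 1) * (catalan k : ℚ)) - p ^ 2 * w := by
  obtain ⟨e, z, h1, h2⟩ := prod_expand p k k
  obtain ⟨d, hd⟩ := Nat.factorial_dvd_factorial (show k + 1 ≤ p - 1 by omega)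
  have h3 := shifted_term p k hk
  rw [h1] at h3
  set V : ℤ := (-1 : ℤ) ^ k * (((p - k).choose (k + 1) : ℤ) + ((p - 1 - k).choose k : ℤ))
  rw [Nat.ascFactorial_eq_factorial_mul_choose, ← two_mul] at h2 h3
  have h4 := succ_mul_catalan_eq_centralBinom k
  rw [Nat.centralBinom_eq_two_mul_choose] at h4
  rw [← h4] at h2 h3 ⊢
  have h3' : ((p : ℚ) + 1) * (((k.factorial * ((k + 1) * catalan k) : ℕ) : ℚ) - p * e + p ^ 2 * z)
      = ((k + 1).factorial : ℚ) * V := by exact_mod_cast h3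
  refine ⟨(p + 1) * z * d, ?_⟩
  have hk1 : (k : ℚ) + 1 ≠ 0 := by positivity
  rw [hd]
  rw [h2, Nat.factorial_succ] at h3'
  rw [Nat.factorial_succ]
  push_cast at h3' ⊢
  rw [mul_div_cancel_left₀ _ hk1]
  linear_combination (d : ℚ) * h3'

theorem harmonic_catalan_sum_congruence (p : ℕ) (hp : p.Prime) (hp5 : 5 ≤ p) :
    ratCongr p 2
      ((p : ℚ) * ∑ k ∈ Finset.range (p - 1),
        ((2 * k).choose k : ℚ) / (k + 1) * (H k - H (2 * k)))
      (((2 * p - 2).choose (p - 1) : ℚ) / p +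
        (1 / (p + 1 : ℚ)) * ∑ k ∈ Finset.range (p + 1),
          (-1 : ℚ) ^ k * ((p + 1).choose k : ℚ) * ((2 * p - 2 * k).choose (p - k) : ℚ)) := by
  obtain ⟨y, hy⟩ := main_int p hp hp5
  have ht : ∀ k, ∃ w : ℤ, k ∈ Finset.range (p - 1) →
      ((p : ℚ) * (((2 * k).choose k : ℚ) / (k + 1) * (H k - H (2 * k))))
      * ((p + 1) * ((p - 1).factorial : ℚ)) =
      ((p - 1).factorial : ℚ) * (((-1 : ℤ) ^ k * (((p - k).choose (k + 1) : ℤ)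
      + ((p - 1 - k).choose k : ℤ)) : ℤ) - (p + 1) * (catalan k : ℚ)) - p ^ 2 * w := by
    intro k
    by_cases hk : k + 1 < p
    · obtain ⟨w, hw⟩ := term_eq p k hk
      exact ⟨w, fun _ => hw⟩
    · exact ⟨0, fun h => by have := Finset.mem_range.1 h; omega⟩
  choose w hw using ht
  have hsum := Finset.sum_congr (rfl : Finset.range (p - 1) = Finset.range (p - 1)) hw
  rw [← Finset.sum_mul, ← Finset.mul_sum, Finset.sum_sub_distrib, ← Finset.mul_sum,
    ← Finset.mul_sum, Finset.sum_sub_distrib, ← Finset.mul_sum, ← Int.cast_sum,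
    shifted_sum p (by omega)] at hsum
  have hS : ∑ k ∈ Finset.range p, (catalan k : ℤ)
      = ∑ k ∈ Finset.range (p - 1), (catalan k : ℤ) + catalan (p - 1) := by
    rw [← Finset.sum_range_succ, show p - 1 + 1 = p by omega]
  rw [hS] at hy
  have hc : ((2 * p - 2).choose (p - 1) : ℚ) / p = catalan (p - 1) := by
    have h4 := succ_mul_catalan_eq_centralBinom (p - 1)
    rw [Nat.centralBinom_eq_two_mul_choose, show 2 * (p - 1) = 2 * p - 2 by omega,
      show p - 1 + 1 = p by omega] at h4
    have hp0 : (p : ℚ) ≠ 0 := by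
      have := hp.ne_zero
      exact_mod_cast this
    rw [← h4, Nat.cast_mul, mul_div_cancel_left₀ _ hp0]
  have hyq := congrArg (fun x : ℤ => (x : ℚ)) hy
  push_cast at hyq hsum
  refine ⟨(p - 1).factorial * y - ∑ k ∈ Finset.range (p - 1), w k, (p + 1) * ((p - 1).factorial : ℤ),
    ?_, ?_⟩
  · intro h
    rcases (Nat.prime_iff_prime_int.1 hp).dvd_or_dvd h with h | h
    · have h1 : (p : ℤ) ∣ 1 := (Int.dvd_add_right (dvd_refl _)).1 h
      have h2 := Int.le_of_dvd one_pos h1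
      omega
    · have := (hp.dvd_factorial).1 (Int.natCast_dvd_natCast.1 h)
      omega
  · rw [hc]
    have hp1 : (p : ℚ) + 1 ≠ 0 := by positivity
    have hT : ∀ T : ℚ, (1 / ((p : ℚ) + 1) * T) * (p + 1) = T := by
      intro T; field_simp
    push_cast
    rw [sub_mul, hsum, add_mul (catalan (p - 1) : ℚ)]
    have e : ∀ T : ℚ, (1 / ((p : ℚ) + 1) * T) * ((p + 1) * ((p - 1).factorial : ℚ))
        = T * ((p - 1).factorial : ℚ) := by
      intro T; rw [← mul_assoc, hT]
    rw [e]
    linear_combination ((p - 1).factorial : ℚ) * hyq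
end
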